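/- The partial derivative of the fourth component f̃₄ of the spatial path-following error model with respect to the control ũ, evaluated at (x̃, ũ) = (0, 0), equals v̄ · (M₁ + L₂ cos β₂ᵣ) / (L₂ cos β₃ᵣ · Eᵣ²). -/

import Mathlib

/-!
As a function of the control, the joint-angle rate is a Möbius transformation, so its derivative
is the determinant divided by the square of the denominator. By `sin² + cos² = 1` the determinant
is `cos β₃ * (M + L * cos β₂) / L`, and one factor `cos β₃` cancels.
-/

theorem hasDerivAt_affine_div_affine {𝕜 : Type*} [NontriviallyNormedField 𝕜] (a b c d : 𝕜)
    {x : 𝕜} (hx : c * x + d ≠ 0) :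
    HasDerivAt (fun t ↦ (a * t + b) / (c * t + d)) ((a * d - b * c) / (c * x + d) ^ 2) x := by
  have hasDerivAt_affine (m k : 𝕜) : HasDerivAt (fun t ↦ m * t + k) m x := by
    simpa using ((hasDerivAt_id x).const_mul m).add_const k
  exact ((hasDerivAt_affine a b).div (hasDerivAt_affine c d) hx).congr_deriv (by ring)

/-- The derivative of the joint angle `β₂` with respect to the signed distance travelled by the
trailer, at joint angles `β₂`, `β₃` and control `u`, for lengths `L = L₂` and `M = M₁`. The
denominator is `C₁(β₂, β₃, u)`. -/
noncomputable def jointAngleRate (L M β₂ β₃ u : ℝ) : ℝ :=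
  (u - Real.sin β₂ / L + M / L * Real.cos β₂ * u) /
    (Real.cos β₃ * (Real.cos β₂ + M * u * Real.sin β₂))

theorem jointAngleRate_eq_affine_div_affine (L M β₂ β₃ u : ℝ) :
    jointAngleRate L M β₂ β₃ u =
      ((1 + M / L * Real.cos β₂) * u + -(Real.sin β₂ / L)) /
        (Real.cos β₃ * (M * Real.sin β₂) * u + Real.cos β₃ * Real.cos β₂) := by
  unfold jointAngleRate
  congr 1 <;> ring

theorem jointAngleRate_det {L : ℝ} (hL : L ≠ 0) (M β₂ β₃ : ℝ) :
    (1 + M / L * Real.cos β₂) * (Real.cos β₃ * Real.cos β₂) -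
        -(Real.sin β₂ / L) * (Real.cos β₃ * (M * Real.sin β₂)) =
      Real.cos β₃ * (M + L * Real.cos β₂) / L := by
  field_simp
  linear_combination Real.cos β₃ * M * Real.sin_sq_add_cos_sq β₂

theorem hasDerivAt_jointAngleRate {L M β₂ β₃ u : ℝ} (hL : L ≠ 0) (hβ₃ : Real.cos β₃ ≠ 0)
    (hE : Real.cos β₂ + M * u * Real.sin β₂ ≠ 0) :
    HasDerivAt (jointAngleRate L M β₂ β₃)
      ((M + L * Real.cos β₂) /
        (L * Real.cos β₃ * (Real.cos β₂ + M * u * Real.sin β₂) ^ 2)) u := by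
  have denom_eq : Real.cos β₃ * (M * Real.sin β₂) * u + Real.cos β₃ * Real.cos β₂ =
      Real.cos β₃ * (Real.cos β₂ + M * u * Real.sin β₂) := by ring
  rw [funext (jointAngleRate_eq_affine_div_affine L M β₂ β₃)]
  refine (hasDerivAt_affine_div_affine _ _ _ _ (denom_eq ▸ mul_ne_zero hβ₃ hE)).congr_deriv ?_
  rw [jointAngleRate_det hL, denom_eq]
  field_simp

/-- The differentiated function is `f̃₄` at error state `(z̃₃, θ̃₃, β₃, β₂)`; `s` stands for its
factor `(1 - κ z̃₃) / cos θ̃₃`. -/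
theorem stmt_17_general {L M β₂ β₃ u β₂r β₃r ur : ℝ} (v s : ℝ) (hL : L ≠ 0)
    (hβ₃ : Real.cos (β₃ + β₃r) ≠ 0)
    (hE : Real.cos (β₂ + β₂r) + M * (u + ur) * Real.sin (β₂ + β₂r) ≠ 0) :
    HasDerivAt
      (fun t ↦ v * (s * jointAngleRate L M (β₂ + β₂r) (β₃ + β₃r) (t + ur) -
        jointAngleRate L M β₂r β₃r ur))
      (v * (s * ((M + L * Real.cos (β₂ + β₂r)) /
        (L * Real.cos (β₃ + β₃r) *
          (Real.cos (β₂ + β₂r) + M * (u + ur) * Real.sin (β₂ + β₂r)) ^ 2)))) u := by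
  have hasDerivAt_rate := (hasDerivAt_jointAngleRate hL hβ₃ hE).comp_add_const u ur
  exact ((hasDerivAt_rate.const_mul s).sub_const _).const_mul v

/-- ∂f̃₄/∂ũ at the origin equals v̄·(M₁ + L₂ cos β₂ᵣ)/(L₂ cos β₃ᵣ Eᵣ²). -/
theorem stmt_17
    (L2 L3 M1 vb b2r b3r ur : ℝ)
    (hL2 : 0 < L2) (hL3 : 0 < L3)
    (hvb : vb = 1 ∨ vb = -1)
    (C1 : ℝ → ℝ → ℝ → ℝ)
    (hC1 : ∀ β2 β3 u, C1 β2 β3 u = Real.cos β3 * (Real.cos β2 + M1 * u * Real.sin β2))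
    (κ : ℝ) (hκ : κ = Real.tan b3r / L3)
    (Er : ℝ) (hEr : Er = Real.cos b2r + M1 * ur * Real.sin b2r)
    (hcos : Real.cos b3r ≠ 0) (hE : Er ≠ 0)
    (g : ℝ → ℝ)
    -- f̃₄ as a function of the control deviation ũ alone, the error state being zero:
    (hg : ∀ u, g u = vb * ( ((1 - κ * 0) / Real.cos 0) *
        ( ((u + ur) - Real.sin (0 + b2r) / L2 +
            (M1 / L2) * Real.cos (0 + b2r) * (u + ur)) /
          C1 (0 + b2r) (0 + b3r) (u + ur) )
      - ( (ur - Real.sin b2r / L2 + (M1 / L2) * Real.cos b2r * ur) /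
          C1 b2r b3r ur ) )) :
    HasDerivAt g
      (vb * (M1 + L2 * Real.cos b2r) / (L2 * Real.cos b3r * Er ^ 2)) 0 := by
  subst hEr
  obtain rfl : g = fun u ↦ vb * ((1 - κ * 0) / Real.cos 0 *
      jointAngleRate L2 M1 (0 + b2r) (0 + b3r) (u + ur) - jointAngleRate L2 M1 b2r b3r ur) :=
    funext fun u ↦ by simp only [hg, hC1, jointAngleRate]
  simpa [mul_div_assoc] using stmt_17_general (β₂ := 0) (β₃ := 0) (u := 0) (β₂r := b2r)
    (β₃r := b3r) vb 1 hL2.ne' (by simpa using hcos) (by simpa using hE)
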